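/- Under assumption (A_k), there exists ε > 0 sufficiently small such that x_±(t) := η_±(t) + t·g(η_±(t)) belong to C^{2k+1}((1,1+ε)) ∩ C^{(2k+1)/(2k)}([1,1+ε)); they are the envelopes of the family of characteristic lines, i.e. (d/dt)x_±(t) = g(η_±(t)) for 1 ≤ t < 1+ε (so the tangent direction of x = x_±(t) coincides with the characteristic speed at (t,x_±(t))), they form a cusp at (1,0), and x_±(t) = ∓2k(2k+1)^{−(2k+1)/(2k)}(t−1)^{(2k+1)/(2k)} + (g^{(2k+2)}(0)/(2k+2)!)·(2k+1)^{−(k+1)/k}·(t−1)^{(k+1)/k} + o((t−1)^{(k+1)/k}) as t → 1+. -/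

import Mathlib

open Real Filter Topology Set Asymptotics

/-- Finite-degeneracy assumption (A_k). -/
def AssumptionA (k : ℕ) (g : ℝ → ℝ) : Prop :=
  1 ≤ k ∧
  ContDiff ℝ (2 * k + 2 : ℕ) g ∧
  (∃ M, ∀ x, |g x| ≤ M) ∧
  deriv g 0 = -1 ∧
  (∀ x, -1 ≤ deriv g x) ∧
  ∃ r : ℝ → ℝ, ContDiff ℝ (2 * k + 2 : ℕ) r ∧
    (∀ᶠ x in 𝓝 (0 : ℝ), g x = -x + x ^ (2 * k + 1) + r x) ∧
    ∀ j : ℕ, j ≤ 2 * k + 2 →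
      (fun x => iteratedDeriv j r x) =O[𝓝 (0 : ℝ)] fun x => x ^ (2 * k + 2 - j)

/-!
Put `n = 2k`. The characteristic issued from `y` touches the envelope at time `T(y) = -1 / g'(y)`
and position `X(y) = y + T(y) g(y)`, so that `T(η(t)) = t` and `x(t) = X(η(t))`. Taylor's formula
gives `T(y) - 1 = (n + 1) (y ρ(y))ⁿ` and `X(y) = yⁿ⁺¹ Q(y)` with `ρ` and `Q` differentiable at `0`,
`ρ(0) = 1` and `Q(0) = -n`. Measured by `σ = ((t - 1) / (n + 1))^(1/n) = y ρ(y)`, the expansion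
reads `x = -n σⁿ⁺¹ + a σⁿ⁺² + o(σⁿ⁺²)`, and both of its coefficients come from the first-order
expansions of `ρ` and `Q`. The derivative of `x` is `g(η)` because `1 + t g'(η) = 0` cancels the
terms in `η'`. Near `0⁺` the function `g'(y) - yⁿ` is increasing, so
`|η(t) - η(s)|ⁿ ≤ |1/t - 1/s|`, whence the Hölder bound. The negative root becomes a positive one
under `g(x) ↦ -g(-x)`.
-/

section Calculus

/-- The `m`-th Taylor coefficient of `f` at `0`. -/
noncomputable def taylorCoeff (m : ℕ) (f : ℝ → ℝ) : ℝ :=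
  iteratedDeriv m f 0 / (Nat.factorial m : ℝ)

theorem taylorCoeff_deriv (m : ℕ) (f : ℝ → ℝ) :
    taylorCoeff m (deriv f) = (m + 1) * taylorCoeff (m + 1) f := by
  simp only [taylorCoeff, ← iteratedDeriv_succ', Nat.factorial_succ]
  push_cast
  field_simp

theorem isLittleO_sub_taylorCoeff_mul_pow {f : ℝ → ℝ} {m : ℕ} (hf : ContDiff ℝ m f)
    (h0 : ∀ j < m, iteratedDeriv j f 0 = 0) :
    (fun x => f x - taylorCoeff m f * x ^ m) =o[𝓝 0] fun x => x ^ m := by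
  have htaylor : ∀ x, taylorWithinEval f m univ 0 x = taylorCoeff m f * x ^ m := by
    intro x
    rw [taylor_within_apply, Finset.sum_range_succ, Finset.sum_eq_zero]
    · simp only [iteratedDerivWithin_univ, smul_eq_mul, sub_zero, taylorCoeff]
      ring
    · intro j hj
      rw [iteratedDerivWithin_univ, h0 j (Finset.mem_range.1 hj), smul_zero]
  simpa only [htaylor, sub_zero] using taylor_isLittleO_univ (x₀ := 0) hf

theorem hasDerivAt_div_pow_zero {f : ℝ → ℝ} {m : ℕ} (hf : ContDiff ℝ (m + 1 : ℕ) f) (hm : m ≠ 0)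
    (h0 : ∀ j < m + 1, iteratedDeriv j f 0 = 0) :
    HasDerivAt (fun y => f y / y ^ m) (taylorCoeff (m + 1) f) 0 := by
  rw [hasDerivAt_iff_isLittleO]
  refine ((isLittleO_sub_taylorCoeff_mul_pow hf h0).mul_isBigO
    (isBigO_refl (fun x : ℝ => (x ^ m)⁻¹) (𝓝 0))).congr (fun x => ?_) (fun x => ?_)
  all_goals
    rcases eq_or_ne x 0 with rfl | hx
    · simp [hm]
  · simp only [zero_pow hm, div_zero, sub_zero, smul_eq_mul]
    field_simp
    ring
  · rw [sub_zero]
    field_simp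
    ring

theorem isLittleO_pow_mul_sub_reparametrized {Q ρ : ℝ → ℝ} {Q' ρ' : ℝ} (m : ℕ)
    (hQ : HasDerivAt Q Q' 0) (hρ : HasDerivAt ρ ρ' 0) (hρ0 : ρ 0 = 1) :
    (fun y => y ^ m * Q y - Q 0 * (y * ρ y) ^ m
        - (Q' - m * Q 0 * ρ') * (y * ρ y) ^ (m + 1))
      =o[𝓝 0] fun y => (y * ρ y) ^ (m + 1) := by
  set a := Q' - m * Q 0 * ρ'
  have hfirst : (fun y => Q y - Q 0 * ρ y ^ m - a * (y * ρ y ^ (m + 1))) =o[𝓝 0] fun y => y := by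
    have hderiv : HasDerivAt (fun y => Q y - Q 0 * ρ y ^ m - a * (y * ρ y ^ (m + 1))) 0 0 := by
      refine ((hQ.sub ((hρ.pow m).const_mul (Q 0))).sub
        (((hasDerivAt_id (0 : ℝ)).mul (hρ.pow (m + 1))).const_mul a)).congr_deriv ?_
      simp only [hρ0, id, one_pow, Pi.pow_apply, a]
      ring
    simpa [hρ0] using hasDerivAt_iff_isLittleO.1 hderiv
  have hle : (fun y => y ^ (m + 1)) =O[𝓝 0] fun y => (y * ρ y) ^ (m + 1) := by
    have hρinv : (fun y => (ρ y ^ (m + 1))⁻¹) =O[𝓝 0] fun _ => (1 : ℝ) :=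
      ((hρ.continuousAt.pow (m + 1)).inv₀ (by simp [hρ0])).isBigO_one ℝ
    refine (hρinv.mul (isBigO_refl (fun y => (y * ρ y) ^ (m + 1)) _)).congr' ?_ (by simp)
    filter_upwards [hρ.continuousAt.eventually_ne (hρ0 ▸ one_ne_zero)] with y hy
    field_simp
    ring
  refine (((isBigO_refl (fun y : ℝ => y ^ m) (𝓝 0)).mul_isLittleO hfirst).congr
    (fun y => ?_) (fun y => (pow_succ y m).symm)).trans_isBigO hle
  ring

/-- By the inverse function theorem `η` is a local inverse of `Φ`, composed with `Φ ∘ η`. -/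
theorem contDiffAt_of_contDiffAt_comp {𝕜 E F G : Type*} [RCLike 𝕜]
    [NormedAddCommGroup E] [NormedSpace 𝕜 E] [CompleteSpace E]
    [NormedAddCommGroup F] [NormedSpace 𝕜 F] [NormedAddCommGroup G] [NormedSpace 𝕜 G]
    {Φ : E → F} {Φ' : E ≃L[𝕜] F} {η : G → E} {t : G} {n : WithTop ℕ∞} (hn : n ≠ 0)
    (hη : ContinuousAt η t) (hΦ : ContDiffAt 𝕜 n Φ (η t))
    (hΦ' : HasFDerivAt Φ (Φ' : E →L[𝕜] F) (η t)) (hcomp : ContDiffAt 𝕜 n (Φ ∘ η) t) :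
    ContDiffAt 𝕜 n η t := by
  refine ((hΦ.to_localInverse hΦ' hn).comp t hcomp).congr_of_eventuallyEq ?_
  filter_upwards [hη.eventually (hΦ.hasStrictFDerivAt' hΦ' hn).eventually_left_inverse] with s hs
  exact hs.symm

theorem abs_sub_pow_le_abs_sub_of_monotoneOn {f : ℝ → ℝ} {s : Set ℝ} {n : ℕ} (hn : n ≠ 0)
    (hs : ∀ y ∈ s, 0 ≤ y) (hf : MonotoneOn (fun y => f y - y ^ n) s) {y z : ℝ} (hy : y ∈ s)
    (hz : z ∈ s) : |y - z| ^ n ≤ |f y - f z| := by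
  wlog hzy : z ≤ y generalizing y z
  · rw [abs_sub_comm y, abs_sub_comm (f y)]
    exact this hz hy (le_of_not_ge hzy)
  have hmono : f z - z ^ n ≤ f y - y ^ n := hf hz hy hzy
  have hpow : (y - z) ^ n + z ^ n ≤ (y - z + z) ^ n :=
    pow_add_pow_le (sub_nonneg.2 hzy) (hs z hz) hn
  rw [sub_add_cancel] at hpow
  rw [abs_of_nonneg (sub_nonneg.2 hzy)]
  exact le_trans (by linarith) (le_abs_self _)

end Calculus

section OneSidedNeighborhoods

variable {a : ℝ}

theorem eventually_nhdsGE_of_nhdsGT {p : ℝ → Prop} (ha : p a) (h : ∀ᶠ t in 𝓝[>] a, p t) :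
    ∀ᶠ t in 𝓝[≥] a, p t := by
  rw [← Ioi_insert, nhdsWithin_insert, eventually_sup, eventually_pure]
  exact ⟨ha, h⟩

theorem eventually_nhdsGT_eventually_nhds {p : ℝ → Prop} (h : ∀ᶠ t in 𝓝[>] a, p t) :
    ∀ᶠ t in 𝓝[>] a, ∀ᶠ s in 𝓝 t, p s := by
  filter_upwards [eventually_eventually_nhdsWithin.2 h, self_mem_nhdsWithin] with t ht hat
  rwa [isOpen_Ioi.nhdsWithin_eq hat] at ht

theorem eventually_forall_mem_Ico {p : ℝ → Prop} (h : ∀ᶠ t in 𝓝[≥] a, p t) :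
    ∀ᶠ ε in 𝓝[>] (0 : ℝ), ∀ t ∈ Ico a (a + ε), p t := by
  obtain ⟨b, hab, hb⟩ := mem_nhdsGE_iff_exists_Ico_subset.1 h
  filter_upwards [Ioo_mem_nhdsGT (sub_pos.2 hab)] with ε hε t ht
  exact hb ⟨ht.1, by linarith [ht.2, hε.2]⟩

theorem eventually_forall_mem_Ioo {p : ℝ → Prop} (h : ∀ᶠ t in 𝓝[>] a, p t) :
    ∀ᶠ ε in 𝓝[>] (0 : ℝ), ∀ t ∈ Ioo a (a + ε), p t := by
  obtain ⟨b, hab, hb⟩ := mem_nhdsGT_iff_exists_Ioo_subset.1 h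
  filter_upwards [Ioo_mem_nhdsGT (sub_pos.2 hab)] with ε hε t ht
  exact hb ⟨ht.1, by linarith [ht.2, hε.2]⟩

theorem eventually_forall_mem_Ico_prod {p : ℝ → ℝ → Prop}
    (h : ∀ᶠ q in 𝓝[≥] a ×ˢ 𝓝[≥] a, p q.1 q.2) :
    ∀ᶠ ε in 𝓝[>] (0 : ℝ), ∀ t₁ ∈ Ico a (a + ε), ∀ t₂ ∈ Ico a (a + ε), p t₁ t₂ := by
  obtain ⟨s, hs, hp⟩ := eventually_prod_self_iff.1 h
  filter_upwards [eventually_forall_mem_Ico hs] with ε hε t₁ ht₁ t₂ ht₂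
  exact hp t₁ (hε t₁ ht₁) t₂ (hε t₂ ht₂)

end OneSidedNeighborhoods

section NormalForm

variable {n : ℕ} {g : ℝ → ℝ}

/-- The remainder of `g` with respect to the model flow speed `-x + x ^ (n + 1)`. -/
def cuspRemainder (n : ℕ) (g : ℝ → ℝ) (x : ℝ) : ℝ :=
  g x + x - x ^ (n + 1)

/-- `g` is of class `C ^ (n + 2)` and has at `0` the same derivatives as `-x + x ^ (n + 1)` up to
order `n + 1`. For `n = 2k` this is the local content of the finite-degeneracy assumption. -/
structure CuspNormalForm (n : ℕ) (g : ℝ → ℝ) : Prop where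
  contDiff : ContDiff ℝ (n + 2 : ℕ) g
  iteratedDeriv_remainder : ∀ j < n + 2, iteratedDeriv j (cuspRemainder n g) 0 = 0

theorem contDiff_cuspRemainder {m : WithTop ℕ∞} (hg : ContDiff ℝ m g) :
    ContDiff ℝ m (cuspRemainder n g) := by
  unfold cuspRemainder
  fun_prop

theorem taylorCoeff_cuspRemainder (hg : ContDiff ℝ (n + 2 : ℕ) g) :
    taylorCoeff (n + 2) (cuspRemainder n g) = taylorCoeff (n + 2) g := by
  have hsplit : cuspRemainder n g = g + fun x => x ^ 1 - x ^ (n + 1) := by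
    ext x
    simp only [cuspRemainder, Pi.add_apply]
    ring
  rw [taylorCoeff, hsplit, iteratedDeriv_add hg.contDiffAt (by fun_prop),
    iteratedDeriv_fun_sub (by fun_prop) (by fun_prop), iteratedDeriv_fun_pow_zero,
    iteratedDeriv_fun_pow_zero]
  simp [taylorCoeff]

theorem deriv_eq_add_deriv_cuspRemainder (hg : Differentiable ℝ g) (n : ℕ) (y : ℝ) :
    deriv g y = -1 + (n + 1) * y ^ n + deriv (cuspRemainder n g) y := by
  have hr : HasDerivAt (cuspRemainder n g) (deriv g y + 1 - ((n + 1 : ℕ) : ℝ) * y ^ n) y :=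
    ((hg y).hasDerivAt.add (hasDerivAt_id y)).sub (hasDerivAt_pow _ _)
  rw [hr.deriv]
  push_cast
  ring

theorem AssumptionA.cuspNormalForm {k : ℕ} (hA : AssumptionA k g) :
    CuspNormalForm (2 * k) g := by
  obtain ⟨-, hg, -, -, -, r, -, hgr, hO⟩ := hA
  refine ⟨hg, fun j hj => ?_⟩
  have hr : cuspRemainder (2 * k) g =ᶠ[𝓝 0] r := by
    filter_upwards [hgr] with x hx
    rw [cuspRemainder, hx]
    ring
  rw [hr.iteratedDeriv_eq]
  exact (hO j hj.le).eq_zero_imp.self_of_nhds (zero_pow (by omega))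

namespace CuspNormalForm

theorem differentiable (h : CuspNormalForm n g) : Differentiable ℝ g :=
  h.contDiff.differentiable (by simp)

theorem contDiff_deriv (h : CuspNormalForm n g) : ContDiff ℝ (n + 1 : ℕ) (deriv g) :=
  ContDiff.deriv' (by exact_mod_cast h.contDiff)

theorem contDiff_deriv_remainder (h : CuspNormalForm n g) :
    ContDiff ℝ (n + 1 : ℕ) (deriv (cuspRemainder n g)) :=
  ContDiff.deriv' (by exact_mod_cast contDiff_cuspRemainder h.contDiff)

theorem iteratedDeriv_deriv_remainder (h : CuspNormalForm n g) {j : ℕ} (hj : j < n + 1) :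
    iteratedDeriv j (deriv (cuspRemainder n g)) 0 = 0 := by
  rw [← iteratedDeriv_succ']
  exact h.iteratedDeriv_remainder _ (by omega)

theorem exists_eq_neg_add_pow_mul (h : CuspNormalForm n g) :
    ∃ V : ℝ → ℝ, V 0 = 1 ∧ HasDerivAt V (taylorCoeff (n + 2) g) 0 ∧
      ∀ y, g y = -y + y ^ (n + 1) * V y := by
  have hr := contDiff_cuspRemainder (n := n) h.contDiff
  have hr0 : cuspRemainder n g 0 = 0 := h.iteratedDeriv_remainder 0 (by omega)
  refine ⟨fun y => 1 + cuspRemainder n g y / y ^ (n + 1), by simp, ?_, fun y => ?_⟩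
  · rw [← taylorCoeff_cuspRemainder h.contDiff]
    exact (hasDerivAt_div_pow_zero hr (by omega) h.iteratedDeriv_remainder).const_add 1
  · have hg : g y = -y + y ^ (n + 1) + cuspRemainder n g y := by
      simp only [cuspRemainder]
      ring
    rw [hg]
    rcases eq_or_ne y 0 with rfl | hy
    · simp [hr0]
    · field_simp
      ring

theorem exists_deriv_eq_neg_one_add_pow_mul (h : CuspNormalForm n g) (hn : n ≠ 0) :
    ∃ u : ℝ → ℝ, u 0 = 1 ∧ HasDerivAt u ((n + 2) / (n + 1) * taylorCoeff (n + 2) g) 0 ∧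
      ∀ y, deriv g y = -1 + (n + 1) * y ^ n * u y := by
  have hr0 : deriv (cuspRemainder n g) 0 = 0 := h.iteratedDeriv_deriv_remainder (j := 0) (by omega)
  have hdiv := hasDerivAt_div_pow_zero h.contDiff_deriv_remainder hn
    fun _ => h.iteratedDeriv_deriv_remainder
  rw [taylorCoeff_deriv, taylorCoeff_cuspRemainder h.contDiff] at hdiv
  refine ⟨fun y => 1 + (n + 1 : ℝ)⁻¹ * (deriv (cuspRemainder n g) y / y ^ n), by simp [hn],
    ((hdiv.const_mul (n + 1 : ℝ)⁻¹).const_add 1).congr_deriv ?_, fun y => ?_⟩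
  · push_cast
    field_simp
    ring
  · rw [deriv_eq_add_deriv_cuspRemainder h.differentiable n]
    rcases eq_or_ne y 0 with rfl | hy
    · simp [hr0, hn]
    · field_simp
      ring

theorem apply_zero (h : CuspNormalForm n g) : g 0 = 0 := by
  obtain ⟨V, -, -, hg⟩ := h.exists_eq_neg_add_pow_mul
  simpa using hg 0

theorem deriv_zero (h : CuspNormalForm n g) (hn : n ≠ 0) : deriv g 0 = -1 := by
  obtain ⟨u, -, -, hg⟩ := h.exists_deriv_eq_neg_one_add_pow_mul hn
  simpa [hn] using hg 0

theorem hasDerivAt_deriv_zero (h : CuspNormalForm n g) (hn : 2 ≤ n) :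
    HasDerivAt (deriv g) 0 0 := by
  obtain ⟨u, -, hu, hg⟩ := h.exists_deriv_eq_neg_one_add_pow_mul (by omega)
  rw [funext hg]
  refine ((((hasDerivAt_pow n (0 : ℝ)).const_mul (n + 1 : ℝ)).mul hu).const_add
    (-1)).congr_deriv ?_
  simp [show n ≠ 0 by omega, show n - 1 ≠ 0 by omega]

theorem eventually_le_deriv_deriv (h : CuspNormalForm n g) (hn : n ≠ 0) :
    ∀ᶠ y in 𝓝[>] (0 : ℝ), n * y ^ (n - 1) ≤ deriv (deriv g) y := by
  have hr : ContDiff ℝ (n : ℕ) (deriv (deriv (cuspRemainder n g))) :=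
    ContDiff.deriv' (by exact_mod_cast h.contDiff_deriv_remainder)
  have hsmall : deriv (deriv (cuspRemainder n g)) =o[𝓝 0] fun y : ℝ => y ^ (n - 1) := by
    have hzero : ∀ j < n, iteratedDeriv j (deriv (deriv (cuspRemainder n g))) 0 = 0 := by
      intro j hj
      rw [← iteratedDeriv_succ']
      exact h.iteratedDeriv_deriv_remainder (by omega)
    have hcoeff : taylorCoeff (n - 1) (deriv (deriv (cuspRemainder n g))) = 0 := by
      rw [taylorCoeff, hzero _ (Nat.sub_one_lt hn), zero_div]
    simpa only [hcoeff, zero_mul, sub_zero] using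
      isLittleO_sub_taylorCoeff_mul_pow (m := n - 1)
        (hr.of_le (by exact_mod_cast Nat.sub_le n 1)) fun j hj => hzero j (by omega)
  filter_upwards [nhdsWithin_le_nhds (hsmall.bound one_pos), self_mem_nhdsWithin] with y hy hpos
  have hypow : 0 < y ^ (n - 1) := pow_pos hpos _
  have hderiv : HasDerivAt (deriv g)
      ((n + 1) * (n * y ^ (n - 1)) + deriv (deriv (cuspRemainder n g)) y) y := by
    rw [funext (deriv_eq_add_deriv_cuspRemainder h.differentiable n)]
    exact (((hasDerivAt_pow n y).const_mul (n + 1 : ℝ)).const_add (-1)).add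
      ((h.contDiff_deriv_remainder.differentiable (by simp)) y).hasDerivAt
  rw [Real.norm_eq_abs, Real.norm_eq_abs, abs_of_pos hypow, one_mul] at hy
  have hn1 : (1 : ℝ) ≤ n := by exact_mod_cast Nat.one_le_iff_ne_zero.2 hn
  rw [hderiv.deriv]
  nlinarith [(abs_le.1 hy).1, mul_le_mul hn1 hn1 zero_le_one (by linarith)]

theorem exists_abs_sub_pow_le (h : CuspNormalForm n g) (hn : n ≠ 0) :
    ∃ δ > 0, ∀ y ∈ Ico 0 δ, ∀ z ∈ Ico 0 δ, |y - z| ^ n ≤ |deriv g y - deriv g z| := by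
  obtain ⟨δ, hδ, hconv⟩ := mem_nhdsGT_iff_exists_Ioo_subset.1 (h.eventually_le_deriv_deriv hn)
  have hd : ∀ y, HasDerivAt (fun y => deriv g y - y ^ n)
      (deriv (deriv g) y - n * y ^ (n - 1)) y := fun y =>
    ((h.contDiff_deriv.differentiable (by simp)) y).hasDerivAt.sub (hasDerivAt_pow _ _)
  have hmono : MonotoneOn (fun y => deriv g y - y ^ n) (Ico 0 δ) := by
    refine monotoneOn_of_deriv_nonneg (convex_Ico _ _)
      (fun y _ => (hd y).continuousAt.continuousWithinAt)
      (fun y _ => (hd y).differentiableAt.differentiableWithinAt) fun y hy => ?_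
    rw [interior_Ico] at hy
    rw [(hd y).deriv]
    exact sub_nonneg.2 (hconv hy)
  exact ⟨δ, hδ, fun y hy z hz =>
    abs_sub_pow_le_abs_sub_of_monotoneOn hn (fun _ hx => hx.1) hmono hy hz⟩

end CuspNormalForm

end NormalForm

section TouchPoint

variable {n : ℕ} {g : ℝ → ℝ}

/-- The time at which the characteristic issued from `y` touches the envelope: the solution `t` of
`1 + t * g' y = 0`. -/
noncomputable def touchTime (g : ℝ → ℝ) (y : ℝ) : ℝ :=
  -(deriv g y)⁻¹

/-- The position at which the characteristic issued from `y` touches the envelope. -/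
noncomputable def touchPoint (g : ℝ → ℝ) (y : ℝ) : ℝ :=
  y + touchTime g y * g y

/-- The length `((t - 1) / (n + 1)) ^ (1 / n)`: to leading order the positive root at time `t` of
`1 + t * g' = 0`, and the variable in which the envelope is expanded. -/
noncomputable def cuspScale (n : ℕ) (t : ℝ) : ℝ :=
  ((t - 1) / (n + 1)) ^ ((n : ℝ)⁻¹)

theorem cuspScale_pow (n m : ℕ) {t : ℝ} (ht : 1 ≤ t) :
    cuspScale n t ^ m = ((n : ℝ) + 1) ^ (-(m : ℝ) / n) * (t - 1) ^ ((m : ℝ) / n) := by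
  have hn : (0 : ℝ) < n + 1 := by positivity
  rw [cuspScale, ← Real.rpow_mul_natCast (div_nonneg (sub_nonneg.2 ht) hn.le),
    Real.div_rpow (sub_nonneg.2 ht) hn.le, neg_div, Real.rpow_neg hn.le, inv_mul_eq_div,
    inv_mul_eq_div]

namespace CuspNormalForm

theorem touchTime_zero (h : CuspNormalForm n g) (hn : n ≠ 0) : touchTime g 0 = 1 := by
  simp [touchTime, h.deriv_zero hn]

theorem hasDerivAt_touchTime_zero (h : CuspNormalForm n g) (hn : 2 ≤ n) :
    HasDerivAt (touchTime g) 0 0 :=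
  ((h.hasDerivAt_deriv_zero hn).inv (by simp [h.deriv_zero (by omega : n ≠ 0)])).neg.congr_deriv
    (by simp)

theorem eventually_deriv_ne_zero (h : CuspNormalForm n g) (hn : n ≠ 0) :
    ∀ᶠ y in 𝓝 (0 : ℝ), deriv g y ≠ 0 :=
  h.contDiff_deriv.continuous.continuousAt.eventually_ne (by simp [h.deriv_zero hn])

theorem exists_touchTime_sub_one_eq (h : CuspNormalForm n g) (hn : 2 ≤ n) :
    ∃ ρ : ℝ → ℝ, ρ 0 = 1 ∧
      HasDerivAt ρ ((n + 2) / (n * (n + 1)) * taylorCoeff (n + 2) g) 0 ∧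
      ∀ᶠ y in 𝓝 (0 : ℝ), touchTime g y - 1 = (n + 1) * (y * ρ y) ^ n := by
  have hn0 : n ≠ 0 := by omega
  obtain ⟨u, hu0, hu, hdg⟩ := h.exists_deriv_eq_neg_one_add_pow_mul hn0
  have hw := hu.mul (h.hasDerivAt_touchTime_zero hn)
  have hw0 : (u * touchTime g) 0 = 1 := by simp [hu0, h.touchTime_zero hn0]
  refine ⟨fun y => (u * touchTime g) y ^ (n : ℝ)⁻¹, by simp [hw0],
    (hw.rpow_const (Or.inl (by simp [hw0]))).congr_deriv ?_, ?_⟩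
  · simp only [hw0, h.touchTime_zero hn0, Real.one_rpow]
    field_simp
    ring
  · filter_upwards [h.eventually_deriv_ne_zero hn0,
      hw.continuousAt.eventually (lt_mem_nhds (hw0 ▸ one_pos))] with y hy hwy
    rw [mul_pow, Real.rpow_inv_natCast_pow hwy.le hn0, Pi.mul_apply, touchTime]
    field_simp
    linear_combination -hdg y

theorem exists_touchPoint_eq (h : CuspNormalForm n g) (hn : 2 ≤ n) :
    ∃ Q : ℝ → ℝ, Q 0 = -n ∧ HasDerivAt Q (-(n + 1) * taylorCoeff (n + 2) g) 0 ∧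
      ∀ᶠ y in 𝓝 (0 : ℝ), touchPoint g y = y ^ (n + 1) * Q y := by
  have hn0 : n ≠ 0 := by omega
  obtain ⟨V, hV0, hV, hg⟩ := h.exists_eq_neg_add_pow_mul
  obtain ⟨u, hu0, hu, hdg⟩ := h.exists_deriv_eq_neg_one_add_pow_mul hn0
  refine ⟨fun y => touchTime g y * (V y - (n + 1) * u y), ?_,
    ((h.hasDerivAt_touchTime_zero hn).mul (hV.sub (hu.const_mul (n + 1 : ℝ)))).congr_deriv ?_, ?_⟩
  · simp [h.touchTime_zero hn0, hV0, hu0]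
  · rw [h.touchTime_zero hn0]
    field_simp
    ring
  · filter_upwards [h.eventually_deriv_ne_zero hn0] with y hy
    have hpoint : touchPoint g y = touchTime g y * (g y - y * deriv g y) := by
      simp only [touchPoint, touchTime]
      field_simp
      ring
    rw [hpoint]
    linear_combination touchTime g y * hg y - touchTime g y * y * hdg y

theorem eventually_touchPoint_neg (h : CuspNormalForm n g) (hn : 2 ≤ n) :
    ∀ᶠ y in 𝓝[>] (0 : ℝ), touchPoint g y < 0 := by
  obtain ⟨Q, hQ0, hQ, hpoint⟩ := h.exists_touchPoint_eq hn
  have hQneg : Q 0 < 0 := by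
    rw [hQ0, neg_lt_zero]
    positivity
  filter_upwards [nhdsWithin_le_nhds hpoint,
    nhdsWithin_le_nhds (hQ.continuousAt.eventually (gt_mem_nhds hQneg)), self_mem_nhdsWithin]
    with y hy hQy hpos
  rw [hy]
  exact mul_neg_of_pos_of_neg (pow_pos hpos _) hQy

theorem isLittleO_touchPoint (h : CuspNormalForm n g) (hn : 2 ≤ n) :
    (fun y => touchPoint g y + n * cuspScale n (touchTime g y) ^ (n + 1)
        - taylorCoeff (n + 2) g * cuspScale n (touchTime g y) ^ (n + 2))
      =o[𝓝[>] (0 : ℝ)] fun y => cuspScale n (touchTime g y) ^ (n + 2) := by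
  obtain ⟨ρ, hρ0, hρ, htime⟩ := h.exists_touchTime_sub_one_eq hn
  obtain ⟨Q, hQ0, hQ, hpoint⟩ := h.exists_touchPoint_eq hn
  have hρpos : ∀ᶠ y in 𝓝 (0 : ℝ), 0 < ρ y :=
    hρ.continuousAt.eventually (lt_mem_nhds (hρ0 ▸ one_pos))
  have hscale : ∀ᶠ y in 𝓝[>] (0 : ℝ), cuspScale n (touchTime g y) = y * ρ y := by
    filter_upwards [nhdsWithin_le_nhds htime, nhdsWithin_le_nhds hρpos, self_mem_nhdsWithin]
      with y hy hρy hpos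
    rw [cuspScale, hy, mul_div_cancel_left₀ _ (by positivity),
      Real.pow_rpow_inv_natCast (mul_pos hpos hρy).le (by omega)]
  refine ((isLittleO_pow_mul_sub_reparametrized (n + 1) hQ hρ hρ0).mono
    nhdsWithin_le_nhds).congr' ?_ (hscale.mono fun y hy => by simp only [hy])
  filter_upwards [hscale, nhdsWithin_le_nhds hpoint] with y hy hpy
  rw [hy, hpy, hQ0]
  push_cast
  field_simp
  ring

end CuspNormalForm

end TouchPoint

section Envelope

/-- The position at time `t` of the characteristic issued from `η t`. When `η` solves
`1 + t * g' (η t) = 0`, this is the envelope `x(t)` of the characteristics along that root. -/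
def envelope (g η : ℝ → ℝ) (t : ℝ) : ℝ :=
  η t + t * g (η t)

/-- A branch `η` of positive solutions of `1 + t * g' (η t) = 0`, for `t` slightly larger than `1`,
which starts from `0` at time `1`. -/
structure IsPositiveRootBranch (g η : ℝ → ℝ) : Prop where
  apply_one : η 1 = 0
  tendsto : Tendsto η (𝓝[>] 1) (𝓝[>] 0)
  eventually_root : ∀ᶠ t in 𝓝[>] 1, 1 + t * deriv g (η t) = 0

variable {n : ℕ} {g η : ℝ → ℝ}

theorem hasDerivAt_envelope {t : ℝ} (hη : DifferentiableAt ℝ η t)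
    (hg : DifferentiableAt ℝ g (η t)) (hroot : 1 + t * deriv g (η t) = 0) :
    HasDerivAt (envelope g η) (g (η t)) t := by
  refine (hη.hasDerivAt.add ((hasDerivAt_id t).mul
    (hg.hasDerivAt.comp t hη.hasDerivAt))).congr_deriv ?_
  simp only [id, Function.comp_apply]
  linear_combination deriv η t * hroot

namespace IsPositiveRootBranch

theorem tendsto_nhdsGE (hη : IsPositiveRootBranch g η) : Tendsto η (𝓝[≥] 1) (𝓝[≥] 0) := by
  rw [← Ioi_insert (a := (1 : ℝ)), nhdsWithin_insert]
  refine Tendsto.sup ((tendsto_pure_pure η 1).mono_right ?_)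
    (hη.tendsto.mono_right (nhdsWithin_mono _ Ioi_subset_Ici_self))
  rw [hη.apply_one]
  exact pure_le_nhdsWithin self_mem_Ici

theorem eventually_deriv_eq (hη : IsPositiveRootBranch g η) (h : CuspNormalForm n g) (hn : n ≠ 0) :
    ∀ᶠ t in 𝓝[≥] (1 : ℝ), deriv g (η t) = -t⁻¹ := by
  refine eventually_nhdsGE_of_nhdsGT (by simp [hη.apply_one, h.deriv_zero hn]) ?_
  filter_upwards [hη.eventually_root, self_mem_nhdsWithin] with t hroot ht
  have ht0 : t ≠ 0 := (one_pos.trans ht).ne'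
  field_simp
  linarith

theorem eventually_abs_sub_pow_le (hη : IsPositiveRootBranch g η) (h : CuspNormalForm n g)
    (hn : n ≠ 0) :
    ∀ᶠ q in 𝓝[≥] (1 : ℝ) ×ˢ 𝓝[≥] (1 : ℝ), |η q.1 - η q.2| ^ n ≤ |q.1 - q.2| := by
  obtain ⟨δ, hδ, hle⟩ := h.exists_abs_sub_pow_le hn
  have hnear := ((hη.eventually_deriv_eq h hn).and
    (hη.tendsto_nhdsGE.eventually (Ico_mem_nhdsGE hδ))).and self_mem_nhdsWithin
  filter_upwards [hnear.prod_mk hnear] with ⟨s, t⟩ ⟨⟨⟨hs, hsδ⟩, hs1⟩, ⟨ht, htδ⟩, ht1⟩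
  have hst : 1 ≤ s * t := one_le_mul_of_one_le_of_one_le hs1 ht1
  have hs0 : s ≠ 0 := (one_pos.trans_le hs1).ne'
  have ht0 : t ≠ 0 := (one_pos.trans_le ht1).ne'
  calc |η s - η t| ^ n
    _ ≤ |deriv g (η s) - deriv g (η t)| := hle _ hsδ _ htδ
    _ = |(s - t) / (s * t)| := by
      rw [hs, ht]
      congr 1
      field_simp
      ring
    _ = |s - t| / (s * t) := by rw [abs_div, abs_of_pos (one_pos.trans_le hst)]
    _ ≤ |s - t| := div_le_self (abs_nonneg _) hst

theorem eventually_abs_sub_le_rpow (hη : IsPositiveRootBranch g η) (h : CuspNormalForm n g)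
    (hn : n ≠ 0) :
    ∀ᶠ q in 𝓝[≥] (1 : ℝ) ×ˢ 𝓝[≥] (1 : ℝ), |η q.1 - η q.2| ≤ |q.1 - q.2| ^ (n : ℝ)⁻¹ := by
  filter_upwards [hη.eventually_abs_sub_pow_le h hn] with q hq
  rw [← Real.pow_rpow_inv_natCast (abs_nonneg (η q.1 - η q.2)) hn]
  exact Real.rpow_le_rpow (by positivity) hq (by positivity)

theorem eventually_continuousAt (hη : IsPositiveRootBranch g η) (h : CuspNormalForm n g)
    (hn : n ≠ 0) : ∀ᶠ t in 𝓝[>] (1 : ℝ), ContinuousAt η t := by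
  obtain ⟨U, hU, hle⟩ := eventually_prod_self_iff'.1 (hη.eventually_abs_sub_le_rpow h hn)
  have hU' : ∀ᶠ t in 𝓝[>] (1 : ℝ), t ∈ U := nhdsWithin_mono _ Ioi_subset_Ici_self hU
  filter_upwards [eventually_nhdsGT_eventually_nhds hU'] with t ht
  have hbound : Tendsto (fun s => |s - t| ^ (n : ℝ)⁻¹) (𝓝 t) (𝓝 0) := by
    have hcont : Continuous fun s : ℝ => |s - t| ^ (n : ℝ)⁻¹ :=
      (by fun_prop : Continuous fun s : ℝ => |s - t|).rpow_const fun _ => Or.inr (by positivity)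
    simpa [hn] using hcont.tendsto t
  refine tendsto_iff_dist_tendsto_zero.2
    (squeeze_zero' (Eventually.of_forall fun _ => dist_nonneg) ?_ hbound)
  filter_upwards [ht] with s hs
  exact hle s hs t ht.self_of_nhds

theorem eventually_contDiffAt (hη : IsPositiveRootBranch g η) (h : CuspNormalForm n g)
    (hn : n ≠ 0) : ∀ᶠ t in 𝓝[>] (1 : ℝ), ContDiffAt ℝ (n + 1 : ℕ) η t := by
  have hderiv : ∀ᶠ t in 𝓝[>] (1 : ℝ), deriv g (η t) = -t⁻¹ :=
    nhdsWithin_mono _ Ioi_subset_Ici_self (hη.eventually_deriv_eq h hn)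
  filter_upwards [hη.eventually_continuousAt h hn, eventually_nhdsGT_eventually_nhds hderiv,
    hη.tendsto.eventually (h.eventually_le_deriv_deriv hn),
    hη.tendsto.eventually self_mem_nhdsWithin, self_mem_nhdsWithin]
    with t hcont hnear hconv hpos ht
  have hconv0 : deriv (deriv g) (η t) ≠ 0 := by
    have : 0 < n * η t ^ (n - 1) := mul_pos (by positivity) (pow_pos hpos _)
    exact (this.trans_le hconv).ne'
  have hd : HasDerivAt (deriv g) (deriv (deriv g) (η t)) (η t) :=
    ((h.contDiff_deriv.differentiable (by simp)) _).hasDerivAt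
  refine contDiffAt_of_contDiffAt_comp (by simp) hcont h.contDiff_deriv.contDiffAt
    (hd.hasFDerivAt_equiv hconv0) ?_
  exact (contDiffAt_inv ℝ (one_pos.trans ht).ne').neg.congr_of_eventuallyEq hnear

theorem eventually_contDiffAt_envelope (hη : IsPositiveRootBranch g η) (h : CuspNormalForm n g)
    (hn : n ≠ 0) : ∀ᶠ t in 𝓝[>] (1 : ℝ), ContDiffAt ℝ (n + 1 : ℕ) (envelope g η) t := by
  filter_upwards [hη.eventually_contDiffAt h hn] with t ht
  have hg : ContDiff ℝ (n + 1 : ℕ) g := h.contDiff.of_le (by exact_mod_cast Nat.le_succ _)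
  exact ht.add (contDiffAt_id.mul (hg.contDiffAt.comp t ht))

theorem envelope_one (hη : IsPositiveRootBranch g η) (h : CuspNormalForm n g) :
    envelope g η 1 = 0 := by
  simp [envelope, hη.apply_one, h.apply_zero]

theorem eventually_hasDerivWithinAt_envelope (hη : IsPositiveRootBranch g η)
    (h : CuspNormalForm n g) (hn : n ≠ 0) :
    ∀ᶠ t in 𝓝[≥] (1 : ℝ), HasDerivWithinAt (envelope g η) (g (η t)) (Ici 1) t := by
  have hinterior : ∀ᶠ t in 𝓝[>] (1 : ℝ), HasDerivAt (envelope g η) (g (η t)) t := by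
    filter_upwards [hη.eventually_contDiffAt h hn, hη.eventually_root] with t ht hroot
    exact hasDerivAt_envelope (ht.differentiableAt (by simp)) (h.differentiable _) hroot
  refine eventually_nhdsGE_of_nhdsGT ?_ (hinterior.mono fun t ht => ht.hasDerivWithinAt)
  have hη0 : Tendsto η (𝓝[>] 1) (𝓝 0) := hη.tendsto.mono_right nhdsWithin_le_nhds
  have hspeed : Tendsto (fun t => g (η t)) (𝓝[>] 1) (𝓝 (g 0)) :=
    (h.differentiable.continuous.tendsto 0).comp hη0
  have hcont : ContinuousWithinAt (envelope g η) (Ioi 1) 1 := by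
    rw [ContinuousWithinAt, hη.envelope_one h]
    change Tendsto (fun t => η t + t * g (η t)) _ _
    simpa [h.apply_zero] using hη0.add ((tendsto_id.mono_left nhdsWithin_le_nhds).mul hspeed)
  rw [hη.apply_one]
  refine hasDerivWithinAt_Ici_of_tendsto_deriv
    (s := Ioi 1 ∩ {t | HasDerivAt (envelope g η) (g (η t)) t})
    (fun t ht => ht.2.differentiableAt.differentiableWithinAt) (hcont.mono inter_subset_left)
    (inter_mem self_mem_nhdsWithin hinterior) (hspeed.congr' ?_)
  filter_upwards [hinterior] with t ht
  exact ht.deriv.symm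

theorem isBigO_speed_sub (hη : IsPositiveRootBranch g η) (h : CuspNormalForm n g) (hn : n ≠ 0) :
    (fun q : ℝ × ℝ => g (η q.1) - g (η q.2)) =O[𝓝[≥] 1 ×ˢ 𝓝[≥] 1]
      fun q => |q.1 - q.2| ^ (n : ℝ)⁻¹ := by
  have hg : ContDiffAt ℝ 1 g 0 :=
    h.contDiff.contDiffAt.of_le (by exact_mod_cast Nat.le_add_left 1 _)
  obtain ⟨K, U, hU, hlip⟩ := hg.exists_lipschitzOnWith
  have hmem : ∀ᶠ t in 𝓝[≥] (1 : ℝ), η t ∈ U :=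
    (hη.tendsto_nhdsGE.mono_right nhdsWithin_le_nhds).eventually hU
  refine IsBigO.of_bound K ?_
  filter_upwards [hmem.prod_mk hmem, hη.eventually_abs_sub_le_rpow h hn] with q hq hle
  rw [Real.norm_of_nonneg (Real.rpow_nonneg (abs_nonneg _) _)]
  exact (hlip.norm_sub_le hq.1 hq.2).trans (mul_le_mul_of_nonneg_left hle K.coe_nonneg)

theorem eventually_touchTime_eq (hη : IsPositiveRootBranch g η) (h : CuspNormalForm n g)
    (hn : n ≠ 0) : ∀ᶠ t in 𝓝[>] (1 : ℝ), touchTime g (η t) = t := by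
  filter_upwards [nhdsWithin_mono _ Ioi_subset_Ici_self (hη.eventually_deriv_eq h hn)] with t ht
  rw [touchTime, ht, inv_neg, inv_inv, neg_neg]

theorem eventually_touchPoint_eq (hη : IsPositiveRootBranch g η) (h : CuspNormalForm n g)
    (hn : n ≠ 0) : ∀ᶠ t in 𝓝[>] (1 : ℝ), touchPoint g (η t) = envelope g η t := by
  filter_upwards [hη.eventually_touchTime_eq h hn] with t ht
  rw [touchPoint, ht, envelope]

theorem eventually_envelope_neg (hη : IsPositiveRootBranch g η) (h : CuspNormalForm n g)
    (hn : 2 ≤ n) : ∀ᶠ t in 𝓝[>] (1 : ℝ), envelope g η t < 0 := by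
  filter_upwards [hη.tendsto.eventually (h.eventually_touchPoint_neg hn),
    hη.eventually_touchPoint_eq h (by omega)] with t hneg ht
  rwa [← ht]

theorem isLittleO_envelope (hη : IsPositiveRootBranch g η) (h : CuspNormalForm n g) (hn : 2 ≤ n) :
    (fun t => envelope g η t
        + n * ((n + 1 : ℝ) ^ (-(n + 1 : ℝ) / n) * (t - 1) ^ ((n + 1 : ℝ) / n))
        - taylorCoeff (n + 2) g * ((n + 1 : ℝ) ^ (-(n + 2 : ℝ) / n) * (t - 1) ^ ((n + 2 : ℝ) / n)))
      =o[𝓝[>] 1] fun t => (t - 1) ^ ((n + 2 : ℝ) / n) := by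
  have hscale : ∀ m : ℕ, ∀ᶠ t in 𝓝[>] (1 : ℝ), cuspScale n (touchTime g (η t)) ^ m =
      (n + 1 : ℝ) ^ (-(m : ℝ) / n) * (t - 1) ^ ((m : ℝ) / n) := by
    intro m
    filter_upwards [hη.eventually_touchTime_eq h (by omega), self_mem_nhdsWithin] with t ht ht1
    rw [ht, cuspScale_pow n m (le_of_lt ht1)]
  have hscale₁ := hscale (n + 1)
  have hscale₂ := hscale (n + 2)
  push_cast at hscale₁ hscale₂
  have hconst : (n + 1 : ℝ) ^ (-(n + 2 : ℝ) / n) ≠ 0 := by positivity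
  refine (isLittleO_const_mul_right_iff hconst).1
    (((h.isLittleO_touchPoint hn).comp_tendsto hη.tendsto).congr' ?_ hscale₂)
  filter_upwards [hscale₁, hscale₂, hη.eventually_touchPoint_eq h (by omega)] with t h₁ h₂ ht
  rw [Function.comp_apply, h₁, h₂, ht]

end IsPositiveRootBranch

end Envelope

section Reflection

variable {n : ℕ} {g η : ℝ → ℝ}

/-- The conjugate of `g` by `x ↦ -x`. It turns the negative roots of `1 + t * g' = 0` into positive
ones. -/
def reflected (g : ℝ → ℝ) (x : ℝ) : ℝ :=
  -g (-x)

theorem deriv_reflected (g : ℝ → ℝ) (x : ℝ) : deriv (reflected g) x = deriv g (-x) := by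
  unfold reflected
  rw [deriv.fun_neg, deriv_comp_neg, neg_neg]

theorem iteratedDeriv_reflected_zero (m : ℕ) (g : ℝ → ℝ) :
    iteratedDeriv m (reflected g) 0 = -(-1) ^ m * iteratedDeriv m g 0 := by
  unfold reflected
  rw [iteratedDeriv_fun_neg, iteratedDeriv_comp_neg, neg_zero, smul_eq_mul, neg_mul]

theorem taylorCoeff_reflected (hn : Even n) (g : ℝ → ℝ) :
    taylorCoeff n (reflected g) = -taylorCoeff n g := by
  rw [taylorCoeff, iteratedDeriv_reflected_zero, hn.neg_one_pow, neg_one_mul, neg_div, taylorCoeff]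

theorem cuspRemainder_reflected (hn : Even n) (g : ℝ → ℝ) :
    cuspRemainder n (reflected g) = reflected (cuspRemainder n g) := by
  ext x
  simp only [cuspRemainder, reflected, hn.add_one.neg_pow]
  ring

theorem envelope_reflected (g η : ℝ → ℝ) :
    envelope (reflected g) (-η) = -envelope g η := by
  ext t
  simp only [envelope, reflected, Pi.neg_apply, neg_neg]
  ring

namespace CuspNormalForm

theorem reflected (h : CuspNormalForm n g) (hn : Even n) : CuspNormalForm n (reflected g) where
  contDiff := (h.contDiff.comp contDiff_neg).neg
  iteratedDeriv_remainder j hj := by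
    rw [cuspRemainder_reflected hn, iteratedDeriv_reflected_zero, h.iteratedDeriv_remainder j hj,
      mul_zero]

theorem exists_injOn_deriv (h : CuspNormalForm n g) (hn : n ≠ 0) :
    ∃ δ > 0, InjOn (deriv g) (Ico 0 δ) := by
  obtain ⟨δ, hδ, hle⟩ := h.exists_abs_sub_pow_le hn
  refine ⟨δ, hδ, fun y hy z hz hyz => ?_⟩
  have hpow : |y - z| ^ n ≤ 0 := by simpa [hyz] using hle y hy z hz
  exact sub_eq_zero.1 (abs_eq_zero.1 (pow_eq_zero_iff hn |>.1 (hpow.antisymm (by positivity))))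

end CuspNormalForm

end Reflection

section RootPair

/-- Two ordered branches `ηm < ηp` of solutions of `1 + t * g' = 0`, for `t` slightly larger than
`1`, which both start from `0` at time `1`. -/
structure IsRootPair (g ηm ηp : ℝ → ℝ) : Prop where
  left_one : ηm 1 = 0
  right_one : ηp 1 = 0
  tendsto_left : Tendsto ηm (𝓝[>] 1) (𝓝 0)
  tendsto_right : Tendsto ηp (𝓝[>] 1) (𝓝 0)
  eventually_lt : ∀ᶠ t in 𝓝[>] 1, ηm t < ηp t
  eventually_left_root : ∀ᶠ t in 𝓝[>] 1, 1 + t * deriv g (ηm t) = 0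
  eventually_right_root : ∀ᶠ t in 𝓝[>] 1, 1 + t * deriv g (ηp t) = 0

namespace IsRootPair

variable {n : ℕ} {g ηm ηp : ℝ → ℝ}

theorem of_forall_mem_Ioo {ε₀ δ₀ : ℝ} (hε₀ : 0 < ε₀) (hδ₀ : 0 < δ₀)
    (hlt : ∀ t ∈ Ioo (1 : ℝ) (1 + ε₀), ηm t < ηp t)
    (hroots : ∀ t ∈ Ioo (1 : ℝ) (1 + ε₀), ∀ z, |z| < δ₀ → z = ηm t ∨ z = ηp t →
      1 + t * deriv g z = 0)
    (hsm : Tendsto ηm (𝓝[>] 1) (𝓝 0)) (hsp : Tendsto ηp (𝓝[>] 1) (𝓝 0))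
    (hm1 : ηm 1 = 0) (hp1 : ηp 1 = 0) : IsRootPair g ηm ηp := by
  have ht : ∀ᶠ t in 𝓝[>] (1 : ℝ), t ∈ Ioo 1 (1 + ε₀) := Ioo_mem_nhdsGT (by linarith)
  have hsmall : ∀ {η : ℝ → ℝ}, Tendsto η (𝓝[>] 1) (𝓝 0) → ∀ᶠ t in 𝓝[>] 1, |η t| < δ₀ :=
    fun hη => hη.abs.eventually_lt_const (abs_zero.trans_lt hδ₀)
  refine ⟨hm1, hp1, hsm, hsp, ht.mono hlt, ?_, ?_⟩
  · filter_upwards [ht, hsmall hsm] with t ht hδ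
    exact hroots t ht _ hδ (.inl rfl)
  · filter_upwards [ht, hsmall hsp] with t ht hδ
    exact hroots t ht _ hδ (.inr rfl)

theorem reflected (hη : IsRootPair g ηm ηp) : IsRootPair (reflected g) (-ηp) (-ηm) where
  left_one := by simp [hη.right_one]
  right_one := by simp [hη.left_one]
  tendsto_left := neg_zero (G := ℝ) ▸ hη.tendsto_right.neg
  tendsto_right := neg_zero (G := ℝ) ▸ hη.tendsto_left.neg
  eventually_lt := hη.eventually_lt.mono fun _ => neg_lt_neg
  eventually_left_root := hη.eventually_right_root.mono fun t ht => by
    rwa [deriv_reflected, Pi.neg_apply, neg_neg]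
  eventually_right_root := hη.eventually_left_root.mono fun t ht => by
    rwa [deriv_reflected, Pi.neg_apply, neg_neg]

theorem eventually_left_neg (hη : IsRootPair g ηm ηp) (h : CuspNormalForm n g) (hn : n ≠ 0) :
    ∀ᶠ t in 𝓝[>] 1, ηm t < 0 := by
  obtain ⟨δ, hδ, hinj⟩ := h.exists_injOn_deriv hn
  filter_upwards [hη.eventually_lt, hη.eventually_left_root, hη.eventually_right_root,
    hη.tendsto_left.eventually_lt_const hδ, hη.tendsto_right.eventually_lt_const hδ]
    with t hlt hm hp hmδ hpδ
  by_contra! hm0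
  have ht : t ≠ 0 := by
    rintro rfl
    simp at hm
  have hderiv : deriv g (ηm t) = deriv g (ηp t) := mul_left_cancel₀ ht (by linarith)
  exact hlt.ne (hinj ⟨hm0, hmδ⟩ ⟨hm0.trans hlt.le, hpδ⟩ hderiv)

theorem isPositiveRootBranch_right (hη : IsRootPair g ηm ηp) (h : CuspNormalForm n g) (hn : n ≠ 0)
    (heven : Even n) : IsPositiveRootBranch g ηp where
  apply_one := hη.right_one
  tendsto := tendsto_nhdsWithin_iff.2 ⟨hη.tendsto_right,
    (hη.reflected.eventually_left_neg (h.reflected heven) hn).mono fun _ => neg_lt_zero.1⟩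
  eventually_root := hη.eventually_right_root

theorem isPositiveRootBranch_left (hη : IsRootPair g ηm ηp) (h : CuspNormalForm n g) (hn : n ≠ 0)
    (heven : Even n) : IsPositiveRootBranch (_root_.reflected g) (-ηm) :=
  hη.reflected.isPositiveRootBranch_right (h.reflected heven) hn heven

end IsRootPair

end RootPair

section TwoEnvelopes

namespace IsRootPair

variable {n : ℕ} {g ηm ηp : ℝ → ℝ}

theorem eventually_contDiffAt_envelope (hη : IsRootPair g ηm ηp) (h : CuspNormalForm n g)
    (hn : n ≠ 0) (heven : Even n) :
    ∀ᶠ t in 𝓝[>] (1 : ℝ), ContDiffAt ℝ (n + 1 : ℕ) (envelope g ηp) t ∧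
      ContDiffAt ℝ (n + 1 : ℕ) (envelope g ηm) t := by
  filter_upwards
    [(hη.isPositiveRootBranch_right h hn heven).eventually_contDiffAt_envelope h hn,
      (hη.isPositiveRootBranch_left h hn heven).eventually_contDiffAt_envelope
        (h.reflected heven) hn] with t hp hm
  rw [envelope_reflected] at hm
  exact ⟨hp, by simpa using hm.neg⟩

theorem eventually_hasDerivWithinAt_envelope (hη : IsRootPair g ηm ηp) (h : CuspNormalForm n g)
    (hn : n ≠ 0) (heven : Even n) :
    ∀ᶠ t in 𝓝[≥] (1 : ℝ), HasDerivWithinAt (envelope g ηp) (g (ηp t)) (Ici 1) t ∧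
      HasDerivWithinAt (envelope g ηm) (g (ηm t)) (Ici 1) t := by
  filter_upwards
    [(hη.isPositiveRootBranch_right h hn heven).eventually_hasDerivWithinAt_envelope h hn,
      (hη.isPositiveRootBranch_left h hn heven).eventually_hasDerivWithinAt_envelope
        (h.reflected heven) hn] with t hp hm
  rw [envelope_reflected] at hm
  exact ⟨hp, by simpa [_root_.reflected] using hm.neg⟩

theorem eventually_envelope_lt (hη : IsRootPair g ηm ηp) (h : CuspNormalForm n g)
    (hn : 2 ≤ n) (heven : Even n) :
    ∀ᶠ t in 𝓝[>] (1 : ℝ), envelope g ηp t < envelope g ηm t := by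
  have hn0 : n ≠ 0 := by omega
  filter_upwards
    [(hη.isPositiveRootBranch_right h hn0 heven).eventually_envelope_neg h hn,
      (hη.isPositiveRootBranch_left h hn0 heven).eventually_envelope_neg
        (h.reflected heven) hn] with t hp hm
  rw [envelope_reflected, Pi.neg_apply, neg_lt_zero] at hm
  exact hp.trans hm

theorem isBigO_speed_sub (hη : IsRootPair g ηm ηp) (h : CuspNormalForm n g)
    (hn : n ≠ 0) (heven : Even n) :
    (fun q : ℝ × ℝ => (g (ηp q.1) - g (ηp q.2), g (ηm q.1) - g (ηm q.2)))
      =O[𝓝[≥] 1 ×ˢ 𝓝[≥] 1] fun q => |q.1 - q.2| ^ (n : ℝ)⁻¹ := by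
  refine ((hη.isPositiveRootBranch_right h hn heven).isBigO_speed_sub h hn).prod_left ?_
  refine ((hη.isPositiveRootBranch_left h hn heven).isBigO_speed_sub
    (h.reflected heven) hn).neg_left.congr_left fun q => ?_
  simp only [_root_.reflected, Pi.neg_apply, neg_neg]
  ring

theorem isLittleO_left_envelope (hη : IsRootPair g ηm ηp) (h : CuspNormalForm n g)
    (hn : 2 ≤ n) (heven : Even n) :
    (fun t => envelope g ηm t
        - n * ((n + 1 : ℝ) ^ (-(n + 1 : ℝ) / n) * (t - 1) ^ ((n + 1 : ℝ) / n))
        - taylorCoeff (n + 2) g * ((n + 1 : ℝ) ^ (-(n + 2 : ℝ) / n) * (t - 1) ^ ((n + 2 : ℝ) / n)))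
      =o[𝓝[>] 1] fun t => (t - 1) ^ ((n + 2 : ℝ) / n) := by
  refine ((hη.isPositiveRootBranch_left h (by omega) heven).isLittleO_envelope
    (h.reflected heven) hn).neg_left.congr_left fun t => ?_
  rw [envelope_reflected, taylorCoeff_reflected (heven.add even_two), Pi.neg_apply]
  ring

end IsRootPair

end TwoEnvelopes

theorem statement5_general (k : ℕ) (hk : k ≠ 0) (g : ℝ → ℝ) (hg : CuspNormalForm (2 * k) g)
    (ηm ηp : ℝ → ℝ) (hη : IsRootPair g ηm ηp) :
    ∀ᶠ ε in 𝓝[>] (0 : ℝ),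
      ContDiffOn ℝ (2 * k + 1 : ℕ) (envelope g ηp) (Ioo 1 (1 + ε)) ∧
      ContDiffOn ℝ (2 * k + 1 : ℕ) (envelope g ηm) (Ioo 1 (1 + ε)) ∧
      (∀ t ∈ Ico (1 : ℝ) (1 + ε), HasDerivWithinAt (envelope g ηp) (g (ηp t)) (Ici 1) t ∧
        HasDerivWithinAt (envelope g ηm) (g (ηm t)) (Ici 1) t) ∧
      envelope g ηp 1 = 0 ∧ envelope g ηm 1 = 0 ∧
      (∀ t ∈ Ioo (1 : ℝ) (1 + ε), envelope g ηp t < envelope g ηm t) ∧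
      (∃ C : ℝ, ∀ t₁ ∈ Ico (1 : ℝ) (1 + ε), ∀ t₂ ∈ Ico (1 : ℝ) (1 + ε),
        |g (ηp t₁) - g (ηp t₂)| ≤ C * |t₁ - t₂| ^ ((1 : ℝ) / (2 * (k : ℝ))) ∧
        |g (ηm t₁) - g (ηm t₂)| ≤ C * |t₁ - t₂| ^ ((1 : ℝ) / (2 * (k : ℝ)))) ∧
      ((fun t => envelope g ηp t
          + 2 * (k : ℝ) * (2 * (k : ℝ) + 1) ^ (-(2 * (k : ℝ) + 1) / (2 * (k : ℝ)))
            * (t - 1) ^ ((2 * (k : ℝ) + 1) / (2 * (k : ℝ)))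
          - iteratedDeriv (2 * k + 2) g 0 / (Nat.factorial (2 * k + 2) : ℝ)
            * (2 * (k : ℝ) + 1) ^ (-((k : ℝ) + 1) / (k : ℝ)) * (t - 1) ^ (((k : ℝ) + 1) / (k : ℝ)))
        =o[𝓝[>] (1 : ℝ)] (fun t => (t - 1) ^ (((k : ℝ) + 1) / (k : ℝ)))) ∧
      ((fun t => envelope g ηm t
          - 2 * (k : ℝ) * (2 * (k : ℝ) + 1) ^ (-(2 * (k : ℝ) + 1) / (2 * (k : ℝ)))
            * (t - 1) ^ ((2 * (k : ℝ) + 1) / (2 * (k : ℝ)))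
          - iteratedDeriv (2 * k + 2) g 0 / (Nat.factorial (2 * k + 2) : ℝ)
            * (2 * (k : ℝ) + 1) ^ (-((k : ℝ) + 1) / (k : ℝ)) * (t - 1) ^ (((k : ℝ) + 1) / (k : ℝ)))
        =o[𝓝[>] (1 : ℝ)] (fun t => (t - 1) ^ (((k : ℝ) + 1) / (k : ℝ)))) := by
  have hn : 2 ≤ 2 * k := by omega
  have hn0 : 2 * k ≠ 0 := by omega
  have heven : Even (2 * k) := even_two_mul k
  obtain ⟨C, hC⟩ := (hη.isBigO_speed_sub hg hn0 heven).bound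
  have hp := (hη.isPositiveRootBranch_right hg hn0 heven).isLittleO_envelope hg hn
  have hm := hη.isLittleO_left_envelope hg hn heven
  have hexp : (2 * (k : ℝ) + 2) / (2 * k) = (k + 1) / k := by
    field_simp
  have hexp_neg : -(2 * (k : ℝ) + 2) / (2 * k) = -(k + 1) / k := by
    rw [neg_div, hexp, neg_div]
  simp only [taylorCoeff, Nat.cast_mul, Nat.cast_ofNat, hexp, hexp_neg, ← mul_assoc] at hp hm
  filter_upwards [eventually_forall_mem_Ioo (hη.eventually_contDiffAt_envelope hg hn0 heven),
    eventually_forall_mem_Ico (hη.eventually_hasDerivWithinAt_envelope hg hn0 heven),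
    eventually_forall_mem_Ioo (hη.eventually_envelope_lt hg hn heven),
    eventually_forall_mem_Ico_prod
      (p := fun t₁ t₂ => ‖(g (ηp t₁) - g (ηp t₂), g (ηm t₁) - g (ηm t₂))‖
        ≤ C * ‖|t₁ - t₂| ^ ((2 * k : ℕ) : ℝ)⁻¹‖) hC] with ε hsmooth hderiv hlt hholder
  refine ⟨fun t ht => (hsmooth t ht).1.contDiffWithinAt,
    fun t ht => (hsmooth t ht).2.contDiffWithinAt, hderiv,
    by simp [envelope, hη.right_one, hg.apply_zero],
    by simp [envelope, hη.left_one, hg.apply_zero], hlt, ⟨C, fun t₁ h₁ t₂ h₂ => ?_⟩, hp, hm⟩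
  have hpair := hholder t₁ h₁ t₂ h₂
  rw [Real.norm_of_nonneg (Real.rpow_nonneg (abs_nonneg _) _), ← one_div] at hpair
  push_cast at hpair
  exact norm_prod_le_iff.1 hpair

/-- Under assumption (A_k), the curves `x_±(t) = η_±(t) + t g(η_±(t))` are
`C^{2k+1}` in `(1,1+ε)` and `C^{(2k+1)/(2k)}` up to `t = 1` (derivative Hölder of exponent
`1/(2k)`), they are envelopes of the characteristics: `x_±'(t) = g(η_±(t))`, they form a
cusp at `(1,0)` (both start at `(1,0)` with common tangent speed `g(0)` and `x₊ < x₋`),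
and they admit the stated expansions. -/
theorem statement5 (k : ℕ) (g : ℝ → ℝ) (hA : AssumptionA k g)
    (ε₀ δ₀ : ℝ) (hε₀ : 0 < ε₀) (hδ₀ : 0 < δ₀)
    (ηm ηp : ℝ → ℝ)
    (hlt : ∀ t ∈ Ioo (1 : ℝ) (1 + ε₀), ηm t < ηp t)
    (hroots : ∀ t ∈ Ioo (1 : ℝ) (1 + ε₀), ∀ z : ℝ, |z| < δ₀ →
      (1 + t * deriv g z = 0 ↔ z = ηm t ∨ z = ηp t))
    (hsm : Tendsto ηm (𝓝[>] (1 : ℝ)) (𝓝 0))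
    (hsp : Tendsto ηp (𝓝[>] (1 : ℝ)) (𝓝 0))
    (hm1 : ηm 1 = 0) (hp1 : ηp 1 = 0)
    (xm xp : ℝ → ℝ)
    (hxm : ∀ t, xm t = ηm t + t * g (ηm t))
    (hxp : ∀ t, xp t = ηp t + t * g (ηp t)) :
    ∃ ε : ℝ, 0 < ε ∧ ε ≤ ε₀ ∧
      -- interior regularity
      ContDiffOn ℝ (2 * k + 1 : ℕ) xp (Ioo 1 (1 + ε)) ∧
      ContDiffOn ℝ (2 * k + 1 : ℕ) xm (Ioo 1 (1 + ε)) ∧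
      -- envelope property: the tangent of x = x_±(t) is the characteristic speed,
      -- including one-sidedly at t = 1 (in particular x_±(1) = 0, x_±'(1) = g 0)
      (∀ t ∈ Ico (1 : ℝ) (1 + ε), HasDerivWithinAt xp (g (ηp t)) (Ici 1) t ∧
        HasDerivWithinAt xm (g (ηm t)) (Ici 1) t) ∧
      xp 1 = 0 ∧ xm 1 = 0 ∧
      -- cusp at (1,0)
      (∀ t ∈ Ioo (1 : ℝ) (1 + ε), xp t < xm t) ∧
      -- C^{(2k+1)/(2k)} up to t = 1: the first derivative g(η_±(t)) is Hölder of exponent 1/(2k)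
      (∃ C : ℝ, ∀ t₁ ∈ Ico (1 : ℝ) (1 + ε), ∀ t₂ ∈ Ico (1 : ℝ) (1 + ε),
        |g (ηp t₁) - g (ηp t₂)| ≤ C * |t₁ - t₂| ^ ((1 : ℝ) / (2 * (k : ℝ))) ∧
        |g (ηm t₁) - g (ηm t₂)| ≤ C * |t₁ - t₂| ^ ((1 : ℝ) / (2 * (k : ℝ)))) ∧
      -- expansions
      ((fun t => xp t + 2 * (k : ℝ) * (2 * (k : ℝ) + 1) ^ (-(2 * (k : ℝ) + 1) / (2 * (k : ℝ)))
            * (t - 1) ^ ((2 * (k : ℝ) + 1) / (2 * (k : ℝ)))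
          - iteratedDeriv (2 * k + 2) g 0 / (Nat.factorial (2 * k + 2) : ℝ)
            * (2 * (k : ℝ) + 1) ^ (-((k : ℝ) + 1) / (k : ℝ)) * (t - 1) ^ (((k : ℝ) + 1) / (k : ℝ)))
        =o[𝓝[>] (1 : ℝ)] (fun t => (t - 1) ^ (((k : ℝ) + 1) / (k : ℝ)))) ∧
      ((fun t => xm t - 2 * (k : ℝ) * (2 * (k : ℝ) + 1) ^ (-(2 * (k : ℝ) + 1) / (2 * (k : ℝ)))
            * (t - 1) ^ ((2 * (k : ℝ) + 1) / (2 * (k : ℝ)))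
          - iteratedDeriv (2 * k + 2) g 0 / (Nat.factorial (2 * k + 2) : ℝ)
            * (2 * (k : ℝ) + 1) ^ (-((k : ℝ) + 1) / (k : ℝ)) * (t - 1) ^ (((k : ℝ) + 1) / (k : ℝ)))
        =o[𝓝[>] (1 : ℝ)] (fun t => (t - 1) ^ (((k : ℝ) + 1) / (k : ℝ)))) := by
  obtain rfl : xp = envelope g ηp := funext hxp
  obtain rfl : xm = envelope g ηm := funext hxm
  have hη : IsRootPair g ηm ηp := .of_forall_mem_Ioo hε₀ hδ₀ hlt
    (fun t ht z hz => (hroots t ht z hz).2) hsm hsp hm1 hp1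
  obtain ⟨ε, hmain, hε, hle⟩ := ((statement5_general k (Nat.one_le_iff_ne_zero.1 hA.1) g
    hA.cuspNormalForm ηm ηp hη).and (Ioc_mem_nhdsGT hε₀)).exists
  exact ⟨ε, hε, hle, hmain⟩
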